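/- arXiv:2504.13430 — 2 statements merged into one kernel-verified Lean document; each statement's English description precedes it below -/
import Mathlib

section
/- (Fundamental Lemma of Nashian Allocation.) Suppose the feasible allocation x satisfies the Nashian Greedy condition and the valuations have unit monopolist utilities. Let x̃ be any feasible allocation and let Ũ a t = ∫_0^t v a s · x̃ a s ds. Then for every t ∈ [0,T], (1/n) ∑_a Ũ a t / U a t ≤ log(n+1). -/
open MeasureTheory Real

/-!
Let `p s` be the largest ratio `v b s / U b s`. The greedy condition says that every agent `a` who
receives something at time `s` has `v a s / U a s = p s`, so at each instant `x` maximises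
`∑ a, v a s / U a s * y a` over the feasible divisions `y`. Since `U a` is nondecreasing,
`Ũ a t / U a t ≤ ∫₀ᵗ v a * x̃ a / U a`, and hence
`∑ a, Ũ a t / U a t ≤ ∑ a, ∫₀ᵗ v a * x a / U a = ∑ a, log (U a t / U a 0)`,
because `U a` is absolutely continuous with derivative `v a * x a` almost everywhere. Each utility
gain `U a t - U a 0` is at most the monopolist utility of `a`, which bounds the logarithms.
-/

open Set Filter intervalIntegral

section Analysis

variable {a b : ℝ} {f F : ℝ → ℝ}

lemma absolutelyContinuousOnInterval_comp_of_lipschitzOnWith {X Y : Type*} [PseudoMetricSpace X]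
    [PseudoMetricSpace Y] {G : ℝ → X} {g : X → Y} {K : NNReal}
    (hg : LipschitzOnWith K g (G '' uIcc a b)) (hG : AbsolutelyContinuousOnInterval G a b) :
    AbsolutelyContinuousOnInterval (g ∘ G) a b := by
  have hlim := Tendsto.const_mul (K : ℝ) hG
  rw [mul_zero] at hlim
  refine squeeze_zero' (.of_forall fun E => Finset.sum_nonneg fun _ _ => dist_nonneg) ?_ hlim
  filter_upwards [mem_inf_of_right (mem_principal_self _)] with E hE
  rw [Finset.mul_sum]
  exact Finset.sum_le_sum fun i hi => hg.dist_le_mul _ (mem_image_of_mem G (hE.1 i hi).1) _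
    (mem_image_of_mem G (hE.1 i hi).2)

lemma absolutelyContinuousOnInterval_log (hF : AbsolutelyContinuousOnInterval F a b)
    (hF0 : ∀ s ∈ uIcc a b, F s ≠ 0) :
    AbsolutelyContinuousOnInterval (fun s => log (F s)) a b := by
  have himage : F '' uIcc a b ⊆ {0}ᶜ := image_subset_iff.2 hF0
  have hconvex : Convex ℝ (F '' uIcc a b) :=
    (isPreconnected_uIcc.image F hF.continuousOn).ordConnected.convex
  have hcompact : IsCompact (F '' uIcc a b) := isCompact_uIcc.image_of_continuousOn hF.continuousOn
  obtain ⟨K, hK⟩ :=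
    (contDiffOn_log (n := 1).mono himage).exists_lipschitzOnWith one_ne_zero hconvex hcompact
  exact absolutelyContinuousOnInterval_comp_of_lipschitzOnWith (g := log) hK hF

lemma integral_div_primitive_eq_log_sub_log {c : ℝ} (hf : IntervalIntegrable f volume a b)
    (hF0 : ∀ s ∈ uIcc a b, c + ∫ r in a..s, f r ≠ 0) :
    ∫ s in a..b, f s / (c + ∫ r in a..s, f r) = log (c + ∫ r in a..b, f r) - log c := by
  have hac : AbsolutelyContinuousOnInterval (fun s => c + ∫ r in a..s, f r) a b :=
    (LipschitzWith.const c).lipschitzOnWith.absolutelyContinuousOnInterval.fun_add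
      (hf.absolutelyContinuousOnInterval_intervalIntegral left_mem_uIcc)
  have hftc := (absolutelyContinuousOnInterval_log hac hF0).integral_deriv_eq_sub
  rw [integral_same, add_zero] at hftc
  rw [← hftc]
  refine intervalIntegral.integral_congr_ae ?_
  filter_upwards [hf.ae_hasDerivAt_integral] with s hs hmem
  have hs' := uIoc_subset_uIcc hmem
  exact (((hs hs' a left_mem_uIcc).const_add c).log (hF0 s hs')).deriv.symm

variable {μ : Measure ℝ}

lemma monotoneOn_primitive_of_nonneg (hf : IntegrableOn f (Icc a b) μ)
    (hf0 : 0 ≤ᵐ[μ.restrict (Icc a b)] f) :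
    MonotoneOn (fun t => ∫ s in a..t, f s ∂μ) (Icc a b) := by
  intro r hr t ht hrt
  have hIoc : Ioc a t ⊆ Icc a b := Ioc_subset_Icc_self.trans (Icc_subset_Icc_right ht.2)
  exact integral_mono_interval le_rfl hr.1 hrt (ae_restrict_of_ae_restrict_of_subset hIoc hf0)
    ((intervalIntegrable_iff_integrableOn_Ioc_of_le ht.1).2 (hf.mono_set hIoc))

lemma integrableOn_div_of_monotoneOn (hf : IntegrableOn f (Icc a b) μ)
    (hF : MonotoneOn F (Icc a b)) (hFa : 0 < F a) :
    IntegrableOn (fun s => f s / F s) (Icc a b) μ := by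
  have hle : ∀ s ∈ Icc a b, F a ≤ F s := fun s hs =>
    hF (left_mem_Icc.2 (hs.1.trans hs.2)) hs hs.1
  have hanti : AntitoneOn (fun s => (F s)⁻¹) (Icc a b) := fun r hr s hs hrs =>
    inv_anti₀ (hFa.trans_le (hle r hr)) (hF hr hs hrs)
  simp only [div_eq_mul_inv]
  refine Integrable.mul_bdd (c := (F a)⁻¹) hf
    (aemeasurable_restrict_of_antitoneOn measurableSet_Icc hanti).aestronglyMeasurable ?_
  filter_upwards [ae_restrict_mem measurableSet_Icc] with s hs
  rw [norm_inv, norm_of_nonneg (hFa.le.trans (hle s hs))]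
  exact inv_anti₀ hFa (hle s hs)

lemma integral_div_le_integral_div_of_monotoneOn (hab : a ≤ b) (hf : IntegrableOn f (Icc a b) μ)
    (hf0 : 0 ≤ᵐ[μ.restrict (Icc a b)] f) (hF : MonotoneOn F (Icc a b)) (hFa : 0 < F a) :
    (∫ s in a..b, f s ∂μ) / F b ≤ ∫ s in a..b, f s / F s ∂μ := by
  have hint {g : ℝ → ℝ} : IntegrableOn g (Icc a b) μ → IntervalIntegrable g μ a b := fun hg =>
    (intervalIntegrable_iff_integrableOn_Ioc_of_le hab).2 (hg.mono_set Ioc_subset_Icc_self)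
  rw [← intervalIntegral.integral_div]
  refine integral_mono_ae_restrict hab ((hint hf).div_const _)
    (hint (integrableOn_div_of_monotoneOn hf hF hFa)) ?_
  filter_upwards [hf0, ae_restrict_mem measurableSet_Icc] with s hs0 hs
  exact div_le_div_of_nonneg_left hs0 (hFa.trans_le (hF (left_mem_Icc.2 hab) hs hs.1))
    (hF hs (right_mem_Icc.2 hab) hs.2)

end Analysis

lemma sum_mul_le_sum_mul_of_mem_stdSimplex {ι 𝕜 : Type*} [Fintype ι] [Field 𝕜] [LinearOrder 𝕜]
    [IsStrictOrderedRing 𝕜] {w x y : ι → 𝕜} (hw : ∀ i, 0 ≤ w i) (hx : x ∈ stdSimplex 𝕜 ι)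
    (hmax : ∀ i j, 0 < x i → w j ≤ w i) (hy : ∀ i, 0 ≤ y i) (hy1 : ∑ i, y i ≤ 1) :
    ∑ i, w i * y i ≤ ∑ i, w i * x i := by
  have hle_value (j : ι) : w j ≤ ∑ i, w i * x i :=
    calc w j = ∑ i, w j * x i := by rw [← Finset.mul_sum, hx.2, mul_one]
      _ ≤ ∑ i, w i * x i := Finset.sum_le_sum fun i _ => by
        rcases (hx.1 i).eq_or_lt with hzero | hpos
        · simp only [← hzero, mul_zero, le_refl]
        · exact mul_le_mul_of_nonneg_right (hmax i j hpos) hpos.le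
  calc ∑ j, w j * y j ≤ ∑ j, (∑ i, w i * x i) * y j :=
        Finset.sum_le_sum fun j _ => mul_le_mul_of_nonneg_right (hle_value j) (hy j)
    _ = (∑ i, w i * x i) * ∑ j, y j := by rw [Finset.mul_sum]
    _ ≤ ∑ i, w i * x i :=
        mul_le_of_le_one_right (Finset.sum_nonneg fun i _ => mul_nonneg (hw i) (hx.1 i)) hy1

section Allocation

variable {Ω ι : Type*} [MeasurableSpace Ω] {μ ν : Measure Ω} [Fintype ι] {x : ι → Ω → ℝ}

/-- A feasible allocation: at almost every time the agents `a` receive nonnegative fractions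
`x a s` of a unit of the good that is available at time `s`. The time horizon is encoded in the
measure `μ`, for example as `volume.restrict (Icc 0 T)`. -/
structure IsFeasibleAllocation (μ : Measure Ω) (x : ι → Ω → ℝ) : Prop where
  aestronglyMeasurable (a : ι) : AEStronglyMeasurable (x a) μ
  ae_nonneg_and_sum_le_one : ∀ᵐ s ∂μ, (∀ a, 0 ≤ x a s) ∧ ∑ a, x a s ≤ 1

namespace IsFeasibleAllocation

lemma mono_measure (hx : IsFeasibleAllocation μ x) (hν : ν ≤ μ) : IsFeasibleAllocation ν x where
  aestronglyMeasurable a := (hx.aestronglyMeasurable a).mono_measure hν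
  ae_nonneg_and_sum_le_one := ae_mono hν hx.ae_nonneg_and_sum_le_one

lemma ae_mem_Icc (hx : IsFeasibleAllocation μ x) (a : ι) : ∀ᵐ s ∂μ, x a s ∈ Icc (0 : ℝ) 1 := by
  filter_upwards [hx.ae_nonneg_and_sum_le_one] with s ⟨hnonneg, hsum⟩
  exact ⟨hnonneg a,
    (Finset.single_le_sum (fun b _ => hnonneg b) (Finset.mem_univ a)).trans hsum⟩

lemma integrable_mul (hx : IsFeasibleAllocation μ x) {f : Ω → ℝ} (hf : Integrable f μ) (a : ι) :
    Integrable (fun s => f s * x a s) μ := by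
  refine hf.mul_bdd (c := 1) (hx.aestronglyMeasurable a) ?_
  filter_upwards [hx.ae_mem_Icc a] with s hs
  rw [norm_of_nonneg hs.1]
  exact hs.2

lemma ae_mul_nonneg (hx : IsFeasibleAllocation μ x) {f : Ω → ℝ} (hf : 0 ≤ᵐ[μ] f) (a : ι) :
    0 ≤ᵐ[μ] fun s => f s * x a s := by
  filter_upwards [hf, hx.ae_mem_Icc a] with s hfs hxs
  exact mul_nonneg hfs hxs.1

lemma ae_mul_le (hx : IsFeasibleAllocation μ x) {f : Ω → ℝ} (hf : 0 ≤ᵐ[μ] f) (a : ι) :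
    (fun s => f s * x a s) ≤ᵐ[μ] f := by
  filter_upwards [hf, hx.ae_mem_Icc a] with s hfs hxs
  exact mul_le_of_le_one_right hfs hxs.2

end IsFeasibleAllocation

end Allocation

section NashianGreedy

/-- The utility that an agent with valuation `v` accumulates up to time `t` from the share `x`. -/
noncomputable def utility (v x : ℝ → ℝ) (t : ℝ) : ℝ :=
  ∫ s in (0 : ℝ)..t, v s * x s

/-- The base-`c` utility at time `t`: the agent starts with an endowment `c`, so that ratios of
utilities make sense from time `0` on. -/
noncomputable def baseUtility (c : ℝ) (v x : ℝ → ℝ) (t : ℝ) : ℝ :=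
  c + utility v x t

variable {ι : Type*} [Fintype ι]

/-- The Nashian Greedy condition for base utilities: at almost every time the whole good goes to
agents `a` with maximal ratio of valuation `v a s` to current base utility. The comparison of
ratios is written multiplied out. -/
def IsNashianGreedy (μ : Measure ℝ) (c : ι → ℝ) (v x : ι → ℝ → ℝ) : Prop :=
  ∀ᵐ s ∂μ, ∑ a, x a s = 1 ∧ ∀ a b, 0 < x a s →
    v b s * baseUtility (c a) (v a) (x a) s ≤ v a s * baseUtility (c b) (v b) (x b) s

variable {c : ι → ℝ} {v x y : ι → ℝ → ℝ} {T : ℝ}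

lemma baseUtility_zero (c : ℝ) (v x : ℝ → ℝ) : baseUtility c v x 0 = c := by
  rw [baseUtility, utility, integral_same, add_zero]

lemma monotoneOn_baseUtility {v : ℝ → ℝ} (c : ℝ) (hv : IntegrableOn v (Icc 0 T))
    (hv0 : 0 ≤ᵐ[volume.restrict (Icc 0 T)] v)
    (hx : IsFeasibleAllocation (volume.restrict (Icc 0 T)) x) (a : ι) :
    MonotoneOn (baseUtility c v (x a)) (Icc 0 T) :=
  (monotoneOn_primitive_of_nonneg (hx.integrable_mul hv a) (hx.ae_mul_nonneg hv0 a)).const_add c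

lemma le_baseUtility {v : ℝ → ℝ} (c : ℝ) (hv : IntegrableOn v (Icc 0 T))
    (hv0 : 0 ≤ᵐ[volume.restrict (Icc 0 T)] v)
    (hx : IsFeasibleAllocation (volume.restrict (Icc 0 T)) x) (a : ι) {s : ℝ}
    (hs : s ∈ Icc 0 T) : c ≤ baseUtility c v (x a) s := by
  simpa only [baseUtility_zero] using monotoneOn_baseUtility c hv hv0 hx a
    (left_mem_Icc.2 (hs.1.trans hs.2)) hs hs.1

lemma utility_le_integral {v : ℝ → ℝ} (hT : 0 ≤ T) (hv : IntegrableOn v (Icc 0 T))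
    (hv0 : 0 ≤ᵐ[volume.restrict (Icc 0 T)] v)
    (hx : IsFeasibleAllocation (volume.restrict (Icc 0 T)) x) (a : ι) :
    utility v (x a) T ≤ ∫ s in (0 : ℝ)..T, v s :=
  integral_mono_ae_restrict hT
    ((intervalIntegrable_iff_integrableOn_Icc_of_le hT).2 (hx.integrable_mul hv a))
    ((intervalIntegrable_iff_integrableOn_Icc_of_le hT).2 hv) (hx.ae_mul_le hv0 a)

lemma utility_div_baseUtility_le_integral {v : ℝ → ℝ} {c : ℝ} (hc : 0 < c) (hT : 0 ≤ T)
    (hv : IntegrableOn v (Icc 0 T)) (hv0 : 0 ≤ᵐ[volume.restrict (Icc 0 T)] v)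
    (hx : IsFeasibleAllocation (volume.restrict (Icc 0 T)) x)
    (hy : IsFeasibleAllocation (volume.restrict (Icc 0 T)) y) (a : ι) :
    utility v (y a) T / baseUtility c v (x a) T ≤
      ∫ s in (0 : ℝ)..T, v s * y a s / baseUtility c v (x a) s :=
  integral_div_le_integral_div_of_monotoneOn hT (hy.integrable_mul hv a) (hy.ae_mul_nonneg hv0 a)
    (monotoneOn_baseUtility c hv hv0 hx a) ((baseUtility_zero _ _ _).symm ▸ hc)

lemma integral_div_baseUtility_eq_log {v : ℝ → ℝ} {c : ℝ} (hc : 0 < c) (hT : 0 ≤ T)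
    (hv : IntegrableOn v (Icc 0 T)) (hv0 : 0 ≤ᵐ[volume.restrict (Icc 0 T)] v)
    (hx : IsFeasibleAllocation (volume.restrict (Icc 0 T)) x) (a : ι) :
    ∫ s in (0 : ℝ)..T, v s * x a s / baseUtility c v (x a) s =
      log (baseUtility c v (x a) T / c) := by
  have hpos {s : ℝ} (hs : s ∈ Icc 0 T) : 0 < baseUtility c v (x a) s :=
    hc.trans_le (le_baseUtility c hv hv0 hx a hs)
  rw [log_div (hpos (right_mem_Icc.2 hT)).ne' hc.ne']
  refine integral_div_primitive_eq_log_sub_log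
    ((intervalIntegrable_iff_integrableOn_Icc_of_le hT).2 (hx.integrable_mul hv a))
    fun s hs => ?_
  rw [uIcc_of_le hT] at hs
  exact (hpos hs).ne'

namespace IsNashianGreedy

lemma ae_sum_div_le (hgreedy : IsNashianGreedy (volume.restrict (Icc 0 T)) c v x)
    (hc : ∀ a, 0 < c a) (hv : ∀ a, IntegrableOn (v a) (Icc 0 T))
    (hv0 : ∀ a, 0 ≤ᵐ[volume.restrict (Icc 0 T)] v a)
    (hx : IsFeasibleAllocation (volume.restrict (Icc 0 T)) x)
    (hy : IsFeasibleAllocation (volume.restrict (Icc 0 T)) y) :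
    ∀ᵐ s ∂volume.restrict (Icc 0 T),
      ∑ a, v a s * y a s / baseUtility (c a) (v a) (x a) s ≤
        ∑ a, v a s * x a s / baseUtility (c a) (v a) (x a) s := by
  filter_upwards [hgreedy, ae_all_iff.2 hv0, hx.ae_nonneg_and_sum_le_one,
    hy.ae_nonneg_and_sum_le_one, ae_restrict_mem measurableSet_Icc]
    with s ⟨hsum, hmax⟩ hvs hxs hys hs
  have hU (a : ι) : 0 < baseUtility (c a) (v a) (x a) s :=
    (hc a).trans_le (le_baseUtility (c a) (hv a) (hv0 a) hx a hs)
  simp only [mul_div_right_comm]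
  exact sum_mul_le_sum_mul_of_mem_stdSimplex (fun a => div_nonneg (hvs a) (hU a).le)
    ⟨hxs.1, hsum⟩ (fun a b ha => (div_le_div_iff₀ (hU b) (hU a)).2 (hmax a b ha)) hys.1 hys.2

lemma sum_integral_div_le (hgreedy : IsNashianGreedy (volume.restrict (Icc 0 T)) c v x)
    (hT : 0 ≤ T) (hc : ∀ a, 0 < c a) (hv : ∀ a, IntegrableOn (v a) (Icc 0 T))
    (hv0 : ∀ a, 0 ≤ᵐ[volume.restrict (Icc 0 T)] v a)
    (hx : IsFeasibleAllocation (volume.restrict (Icc 0 T)) x)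
    (hy : IsFeasibleAllocation (volume.restrict (Icc 0 T)) y) :
    ∑ a, ∫ s in (0 : ℝ)..T, v a s * y a s / baseUtility (c a) (v a) (x a) s ≤
      ∑ a, ∫ s in (0 : ℝ)..T, v a s * x a s / baseUtility (c a) (v a) (x a) s := by
  have hint {z : ι → ℝ → ℝ} (hz : IsFeasibleAllocation (volume.restrict (Icc 0 T)) z) (a : ι) :
      IntervalIntegrable (fun s => v a s * z a s / baseUtility (c a) (v a) (x a) s) volume 0 T :=
    (intervalIntegrable_iff_integrableOn_Icc_of_le hT).2 <|
      integrableOn_div_of_monotoneOn (hz.integrable_mul (hv a) a)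
        (monotoneOn_baseUtility (c a) (hv a) (hv0 a) hx a) ((baseUtility_zero _ _ _).symm ▸ hc a)
  rw [← intervalIntegral.integral_finsetSum fun a _ => hint hy a,
    ← intervalIntegral.integral_finsetSum fun a _ => hint hx a]
  refine integral_mono_ae_restrict hT ?_ ?_ (hgreedy.ae_sum_div_le hc hv hv0 hx hy)
  · simpa only [Finset.sum_fn] using IntervalIntegrable.sum Finset.univ fun a _ => hint hy a
  · simpa only [Finset.sum_fn] using IntervalIntegrable.sum Finset.univ fun a _ => hint hx a

lemma sum_utility_div_baseUtility_le_sum_log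
    (hgreedy : IsNashianGreedy (volume.restrict (Icc 0 T)) c v x)
    (hT : 0 ≤ T) (hc : ∀ a, 0 < c a) (hv : ∀ a, IntegrableOn (v a) (Icc 0 T))
    (hv0 : ∀ a, 0 ≤ᵐ[volume.restrict (Icc 0 T)] v a)
    (hx : IsFeasibleAllocation (volume.restrict (Icc 0 T)) x)
    (hy : IsFeasibleAllocation (volume.restrict (Icc 0 T)) y) :
    ∑ a, utility (v a) (y a) T / baseUtility (c a) (v a) (x a) T ≤
      ∑ a, log (baseUtility (c a) (v a) (x a) T / c a) :=
  calc ∑ a, utility (v a) (y a) T / baseUtility (c a) (v a) (x a) T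
      ≤ ∑ a, ∫ s in (0 : ℝ)..T, v a s * y a s / baseUtility (c a) (v a) (x a) s :=
        Finset.sum_le_sum fun a _ =>
          utility_div_baseUtility_le_integral (hc a) hT (hv a) (hv0 a) hx hy a
    _ ≤ ∑ a, ∫ s in (0 : ℝ)..T, v a s * x a s / baseUtility (c a) (v a) (x a) s :=
        hgreedy.sum_integral_div_le hT hc hv hv0 hx hy
    _ = ∑ a, log (baseUtility (c a) (v a) (x a) T / c a) :=
        Finset.sum_congr rfl fun a _ =>
          integral_div_baseUtility_eq_log (hc a) hT (hv a) (hv0 a) hx a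

end IsNashianGreedy

theorem stmt_1_general (hc : ∀ a, 0 < c a) (hv : ∀ a, IntegrableOn (v a) (Icc 0 T))
    (hv0 : ∀ a, 0 ≤ᵐ[volume.restrict (Icc 0 T)] v a)
    (hx : IsFeasibleAllocation (volume.restrict (Icc 0 T)) x)
    (hgreedy : IsNashianGreedy (volume.restrict (Icc 0 T)) c v x)
    (hy : IsFeasibleAllocation (volume.restrict (Icc 0 T)) y) {t : ℝ} (ht : t ∈ Icc 0 T) :
    ∑ a, utility (v a) (y a) t / baseUtility (c a) (v a) (x a) t ≤
      ∑ a, log (1 + (∫ s in (0 : ℝ)..T, v a s) / c a) := by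
  have hT : 0 ≤ T := ht.1.trans ht.2
  have hsub : Icc 0 t ⊆ Icc 0 T := Icc_subset_Icc_right ht.2
  have hrestrict : volume.restrict (Icc 0 t) ≤ volume.restrict (Icc 0 T) :=
    Measure.restrict_mono hsub le_rfl
  have hgreedy_t : IsNashianGreedy (volume.restrict (Icc 0 t)) c v x := ae_mono hrestrict hgreedy
  have hU_pos (a : ι) : 0 < baseUtility (c a) (v a) (x a) t :=
    (hc a).trans_le (le_baseUtility (c a) (hv a) (hv0 a) hx a ht)
  have hU_le (a : ι) : baseUtility (c a) (v a) (x a) t ≤ c a + ∫ s in (0 : ℝ)..T, v a s :=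
    (monotoneOn_baseUtility (c a) (hv a) (hv0 a) hx a ht (right_mem_Icc.2 hT) ht.2).trans
      (add_le_add_right (utility_le_integral hT (hv a) (hv0 a) hx a) _)
  calc ∑ a, utility (v a) (y a) t / baseUtility (c a) (v a) (x a) t
      ≤ ∑ a, log (baseUtility (c a) (v a) (x a) t / c a) :=
        hgreedy_t.sum_utility_div_baseUtility_le_sum_log ht.1 hc (fun a => (hv a).mono_set hsub)
          (fun a => ae_mono hrestrict (hv0 a)) (hx.mono_measure hrestrict)
          (hy.mono_measure hrestrict)
    _ ≤ ∑ a, log (1 + (∫ s in (0 : ℝ)..T, v a s) / c a) := Finset.sum_le_sum fun a _ => by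
        rw [one_add_div (hc a).ne']
        exact log_le_log (div_pos (hU_pos a) (hc a))
          (div_le_div_of_nonneg_right (hU_le a) (hc a).le)

end NashianGreedy

theorem stmt_1
    (n : ℕ) (hn : 1 ≤ n) (T : ℝ) (hT : 0 < T)
    (v : Fin n → ℝ → ℝ)
    (hv_meas : ∀ a, Measurable (v a))
    (hv_nonneg : ∀ a, ∀ᵐ s ∂(volume.restrict (Set.Icc (0:ℝ) T)), 0 ≤ v a s)
    (hv_int : ∀ a, IntegrableOn (v a) (Set.Icc (0:ℝ) T))
    (hv_unit : ∀ a, ∫ s in (0:ℝ)..T, v a s = 1)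
    (x : Fin n → ℝ → ℝ)
    (hx_meas : ∀ a, Measurable (x a))
    (hx_feas : ∀ᵐ s ∂(volume.restrict (Set.Icc (0:ℝ) T)),
      (∀ a, 0 ≤ x a s) ∧ ∑ a, x a s ≤ 1)
    (U : Fin n → ℝ → ℝ)
    (hU : ∀ a t, U a t = 1 / (n : ℝ) + ∫ s in (0:ℝ)..t, v a s * x a s)
    (hgreedy : ∀ᵐ s ∂(volume.restrict (Set.Icc (0:ℝ) T)),
      (∑ a, x a s = 1) ∧
      ∀ a b, 0 < x a s → v a s * U b s ≥ v b s * U a s)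
    (xt : Fin n → ℝ → ℝ)
    (hxt_meas : ∀ a, Measurable (xt a))
    (hxt_feas : ∀ᵐ s ∂(volume.restrict (Set.Icc (0:ℝ) T)),
      (∀ a, 0 ≤ xt a s) ∧ ∑ a, xt a s ≤ 1)
    (Ut : Fin n → ℝ → ℝ)
    (hUt : ∀ a t, Ut a t = ∫ s in (0:ℝ)..t, v a s * xt a s) :
    ∀ t ∈ Set.Icc (0:ℝ) T,
      (1 / (n : ℝ)) * ∑ a, Ut a t / U a t ≤ Real.log ((n : ℝ) + 1) := by
  intro t ht
  have hn0 : (0 : ℝ) < n := by exact_mod_cast hn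
  obtain rfl : U = fun a => baseUtility (1 / (n : ℝ)) (v a) (x a) := funext₂ hU
  obtain rfl : Ut = fun a => utility (v a) (xt a) := funext₂ hUt
  have hgeneral := stmt_1_general (fun _ => one_div_pos.2 hn0) hv_int hv_nonneg
    ⟨fun a => (hx_meas a).aestronglyMeasurable, hx_feas⟩ hgreedy
    ⟨fun a => (hxt_meas a).aestronglyMeasurable, hxt_feas⟩ ht
  rw [one_div, inv_mul_le_iff₀ hn0]
  simpa [hv_unit, add_comm] using hgeneral
end

section
/- (Critical agents bound.) Let n ≥ 1, let p < 0, let U*_a > 0 for each a ∈ Fin n, and let W = ((1/n) ∑_a (U*_a)^p)^{1/p}. Let β > 0 and Φ > 0, let C ⊆ Fin n, and let R_a be reals with 0 ≤ R_a ≤ β·W for each a ∈ C. If (1/n) ∑_{a∈C} U*_a ≤ β · log(n+1) · W + (Φ/n) ∑_{a∈C} R_a, then |C| / n ≤ max{ (2β · log(n+1))^{|p|/(|p|+1)}, (2Φβ)^{|p|} }. -/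
open Real

/-!
Let `c` be the total weight of `C`. Hölder's inequality shows that the sum of `w a * u a` over `C`
is at least `c ^ (1 + 1 / |p|) * W`. Since `R ≤ β * W` on `C`, the hypothesis bounds that sum above
by `(β * L + Φ * β * c) * W`. After cancelling `W`, the larger of the two summands is at least half
of `c ^ (1 + 1 / |p|)`, and the two cases give the two entries of the maximum.
-/

section WeightedSums

variable {ι : Type*} {w u : ι → ℝ} {p : ℝ}

lemma sum_weight_le_rpow_mul_rpow (s : Finset ι) (hw : ∀ a, 0 ≤ w a) (hu : ∀ a, 0 < u a)
    (hp : p ≤ 0) :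
    ∑ a ∈ s, w a ≤
      (∑ a ∈ s, w a * u a) ^ (1 - (1 - p)⁻¹) * (∑ a ∈ s, w a * u a ^ p) ^ (1 - p)⁻¹ := by
  -- Hölder with weights `w * u`, applied to `u⁻¹` with exponent `1 - p`.
  have holder := inner_le_weight_mul_Lp_of_nonneg s (p := 1 - p) (by linarith)
    (fun a => w a * u a) (fun a => (u a)⁻¹) (fun a => mul_nonneg (hw a) (hu a).le)
    (fun a => inv_nonneg.2 (hu a).le)
  have hweight (a : ι) : w a * u a * (u a)⁻¹ = w a := mul_inv_cancel_right₀ (hu a).ne' _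
  have hpower (a : ι) : w a * u a * (u a)⁻¹ ^ (1 - p) = w a * u a ^ p := by
    rw [mul_assoc, inv_rpow (hu a).le, rpow_sub (hu a), rpow_one, inv_div,
      mul_div_cancel₀ _ (hu a).ne']
  simpa only [hweight, hpower] using holder

lemma rpow_sum_weight_mul_rpow_le_sum {s t : Finset ι} (hst : s ⊆ t) (hw : ∀ a, 0 ≤ w a)
    (hu : ∀ a, 0 < u a) (hp : p < 0) :
    (∑ a ∈ s, w a) ^ (1 - p⁻¹) * (∑ a ∈ t, w a * u a ^ p) ^ p⁻¹ ≤ ∑ a ∈ s, w a * u a := by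
  have hterm (a : ι) : 0 ≤ w a * u a ^ p := mul_nonneg (hw a) (rpow_nonneg (hu a).le p)
  have hS : 0 ≤ ∑ a ∈ s, w a * u a := Finset.sum_nonneg fun a _ => mul_nonneg (hw a) (hu a).le
  have hc : 0 ≤ ∑ a ∈ s, w a := Finset.sum_nonneg fun a _ => hw a
  have hTs : 0 ≤ ∑ a ∈ s, w a * u a ^ p := Finset.sum_nonneg fun a _ => hterm a
  have hTst : ∑ a ∈ s, w a * u a ^ p ≤ ∑ a ∈ t, w a * u a ^ p :=
    Finset.sum_le_sum_of_subset_of_nonneg hst fun a _ _ => hterm a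
  have holder := sum_weight_le_rpow_mul_rpow s hw hu hp.le
  set S := ∑ a ∈ s, w a * u a
  set T := ∑ a ∈ t, w a * u a ^ p
  have hp_inv : p⁻¹ < 0 := inv_lt_zero.2 hp
  have hp_ne : p ≠ 0 := hp.ne
  have hp_one : 0 < 1 - p := by linarith
  have hexp_nonneg : 0 ≤ 1 - p⁻¹ := by linarith
  rcases (hTs.trans hTst).eq_or_lt with hT | hT
  · rwa [← hT, zero_rpow hp_inv.ne, mul_zero]
  calc (∑ a ∈ s, w a) ^ (1 - p⁻¹) * T ^ p⁻¹
      ≤ (S ^ (1 - (1 - p)⁻¹) * T ^ (1 - p)⁻¹) ^ (1 - p⁻¹) * T ^ p⁻¹ := by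
        gcongr
        exact holder.trans (by gcongr)
    _ = S ^ ((1 - (1 - p)⁻¹) * (1 - p⁻¹)) * T ^ ((1 - p)⁻¹ * (1 - p⁻¹) + p⁻¹) := by
        rw [mul_rpow (by positivity) (by positivity), ← rpow_mul hS, ← rpow_mul hT.le, mul_assoc,
          ← rpow_add hT]
    _ = S := by
        have hS_exp : (1 - (1 - p)⁻¹) * (1 - p⁻¹) = 1 := by field_simp; ring
        have hT_exp : (1 - p)⁻¹ * (1 - p⁻¹) + p⁻¹ = 0 := by field_simp; ring
        rw [hS_exp, hT_exp, rpow_one, rpow_zero, mul_one]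

lemma sum_weight_mul_rpow_pos {s t : Finset ι} (hst : s ⊆ t) (hw : ∀ a, 0 ≤ w a)
    (hu : ∀ a, 0 < u a) (hs : 0 < ∑ a ∈ s, w a) : 0 < ∑ a ∈ t, w a * u a ^ p := by
  obtain ⟨a, has, hwa⟩ : ∃ a ∈ s, 0 < w a :=
    Finset.exists_lt_of_sum_lt (by simpa only [Finset.sum_const_zero] using hs)
  exact Finset.sum_pos' (fun b _ => mul_nonneg (hw b) (rpow_nonneg (hu b).le p))
    ⟨a, hst has, mul_pos hwa (rpow_pos_of_pos (hu a) p)⟩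

end WeightedSums

lemma le_max_rpow_of_rpow_le_add {q c A B : ℝ} (hq : 0 < q) (hc : 0 < c)
    (h : c ^ (1 + q⁻¹) ≤ A + B * c) :
    c ≤ max ((2 * A) ^ (q / (q + 1))) ((2 * B) ^ q) := by
  have hpow : 0 < c ^ (1 + q⁻¹) := rpow_pos_of_pos hc _
  rcases le_total (B * c) A with hA | hB
  · have hexp : q / (q + 1) = (1 + q⁻¹)⁻¹ := by field_simp
    rw [hexp]
    exact le_max_of_le_left <|
      (le_rpow_inv_iff_of_pos hc.le (by linarith) (by positivity)).2 (by linarith)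
  · have hroot : c ^ q⁻¹ ≤ 2 * B := by
      rw [rpow_add hc, rpow_one] at h
      exact le_of_mul_le_mul_left (by linarith) hc
    exact le_max_of_le_right <|
      (rpow_inv_le_iff_of_pos hc.le ((rpow_nonneg hc.le _).trans hroot) hq).1 hroot

theorem stmt_8_general {ι : Type*} [Fintype ι] {p : ℝ} (hp : p < 0)
    {w u R : ι → ℝ} (hw : ∀ a, 0 ≤ w a) (hu : ∀ a, 0 < u a)
    {W : ℝ} (hW : W = (∑ a, w a * u a ^ p) ^ (1 / p))
    {β L Φ : ℝ} (hβ : 0 ≤ β) (hΦ : 0 ≤ Φ)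
    {C : Finset ι} (hR : ∀ a ∈ C, R a ≤ β * W)
    (hsum : ∑ a ∈ C, w a * u a ≤ β * L * W + Φ * ∑ a ∈ C, w a * R a) :
    ∑ a ∈ C, w a ≤ max ((2 * β * L) ^ (|p| / (|p| + 1))) ((2 * Φ * β) ^ |p|) := by
  have hc₀ : 0 ≤ ∑ a ∈ C, w a := Finset.sum_nonneg fun a _ => hw a
  rcases hc₀.eq_or_lt with hc | hc
  · rw [← hc]
    exact le_max_of_le_right (by positivity)
  have hWpos : 0 < W := by
    rw [hW]
    exact rpow_pos_of_pos (sum_weight_mul_rpow_pos C.subset_univ hw hu hc) _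
  have hlower := rpow_sum_weight_mul_rpow_le_sum C.subset_univ hw hu hp
  rw [← one_div, ← hW] at hlower
  have hRsum : ∑ a ∈ C, w a * R a ≤ (∑ a ∈ C, w a) * (β * W) := by
    rw [Finset.sum_mul]
    exact Finset.sum_le_sum fun a ha => mul_le_mul_of_nonneg_left (hR a ha) (hw a)
  have hmain : (∑ a ∈ C, w a) ^ (1 + |p|⁻¹) ≤ β * L + Φ * β * ∑ a ∈ C, w a := by
    refine le_of_mul_le_mul_right ?_ hWpos
    rw [abs_of_neg hp, inv_neg, ← sub_eq_add_neg, ← one_div]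
    linarith [mul_le_mul_of_nonneg_left hRsum hΦ]
  simpa only [mul_assoc] using le_max_rpow_of_rpow_le_add (abs_pos.2 hp.ne) hc hmain

theorem stmt_8
    (n : ℕ) (hn : 1 ≤ n)
    (p : ℝ) (hp : p < 0)
    (Ustar : Fin n → ℝ) (hUstar_pos : ∀ a, 0 < Ustar a)
    (W : ℝ) (hW : W = ((1 / (n : ℝ)) * ∑ a, (Ustar a) ^ p) ^ (1 / p))
    (β Φ : ℝ) (hβ : 0 < β) (hΦ : 0 < Φ)
    (C : Finset (Fin n))
    (R : Fin n → ℝ)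
    (hR : ∀ a ∈ C, 0 ≤ R a ∧ R a ≤ β * W)
    (hsum : (1 / (n : ℝ)) * ∑ a ∈ C, Ustar a ≤
      β * Real.log ((n : ℝ) + 1) * W + (Φ / (n : ℝ)) * ∑ a ∈ C, R a) :
    (C.card : ℝ) / (n : ℝ) ≤
      max ((2 * β * Real.log ((n : ℝ) + 1)) ^ (|p| / (|p| + 1)))
          ((2 * Φ * β) ^ |p|) := by
  rw [Finset.mul_sum] at hW
  rw [div_eq_mul_one_div Φ, mul_assoc Φ, Finset.mul_sum, Finset.mul_sum _ R] at hsum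
  simpa [div_eq_mul_inv] using stmt_8_general hp (w := fun _ => 1 / (n : ℝ))
    (fun _ => by positivity) hUstar_pos hW hβ.le hΦ.le (fun a ha => (hR a ha).2) hsum
end
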